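/- arXiv:2505.20284 — 3 statements merged into one kernel-verified Lean document; each statement's English description precedes it below -/
import Mathlib

section
/- Let Φ be a t-uniform purified code state, T ⊆ {1,…,n} with |T| = t, and U a T-standard-form unitary for Φ. Then for every j ∈ {1,…,t} there exists a unitary V on ℂ^{Q^{t−1}} ⊗ ℂ^Q such that for all s' ∈ {0,…,Q−1}^{t−1}: Q^{−1/2} Σ_{r ∈ {0,…,Q−1}} U(e_{s'} ⊗ e_r) ⊗ e_r (a vector in (ℂ^Q)^{⊗(t+1)}, with U(e_{s'} ⊗ e_r) on qudits 1,…,t and e_r on qudit t+1) equals Q^{−1/2} Σ_{f ∈ {0,…,Q−1}} σ_j( V(e_{s'} ⊗ e_f) ⊗ e_f ), where σ_j is the permutation of the t+1 tensor factors that places the t qudits of V(e_{s'} ⊗ e_f) on positions {1,…,t+1}∖{j} (in increasing order) and the factor e_f on position j. In other words, the logical content of the [[t+1,t−1]]_Q code with codewords ω_{s'} = Q^{−1/2} Σ_r U(e_{s'} ⊗ e_r) ⊗ e_r can be recovered from any t of its t+1 physical qudits by a unitary acting only on those t qudits (the recovery identity in the proof of Lemma 2.6). -/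
open scoped BigOperators

noncomputable section

/-- Combine an assignment on `A` with an assignment on the complement of `A`
into a full computational-basis string. -/
def mergeOn {n Q : ℕ} (A : Finset (Fin n)) (u : {i // i ∈ A} → Fin Q)
    (v : {i // i ∉ A} → Fin Q) : Fin n → Fin Q :=
  fun i => if h : i ∈ A then u ⟨i, h⟩ else v ⟨i, h⟩

/-- Reduced density matrix of a purified code state `Φ` on the qudits in `A`
(the reference register and the qudits outside `A` are traced out). -/
def rdm {Q k n : ℕ} (Φ : (Fin k → Fin Q) → (Fin n → Fin Q) → ℂ)
    (A : Finset (Fin n)) :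
    Matrix ({i // i ∈ A} → Fin Q) ({i // i ∈ A} → Fin Q) ℂ :=
  Matrix.of fun u v => ∑ s : Fin k → Fin Q, ∑ w : {i // i ∉ A} → Fin Q,
    Φ s (mergeOn A u w) * (starRingEnd ℂ) (Φ s (mergeOn A v w))

/-- `Φ` is `t`-uniform: every set of `t` qudits is maximally mixed. -/
def TUniform {Q k n : ℕ} (t : ℕ)
    (Φ : (Fin k → Fin Q) → (Fin n → Fin Q) → ℂ) : Prop :=
  ∀ A : Finset (Fin n), A.card = t →
    rdm Φ A = ((Q : ℂ) ^ t)⁻¹ •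
      (1 : Matrix ({i // i ∈ A} → Fin Q) ({i // i ∈ A} → Fin Q) ℂ)


/-- The codewords `ω_{s'} = Q^{-1/2} Σ_r U(e_{s'} ⊗ e_r) ⊗ e_r` of the induced
`[[t+1, t-1]]_Q` code, written in amplitude form.  Here `ℂ^{Q^k} ⊗ (ℂ^Q)^{⊗(n-t-1)}` is
identified with `ℂ^{Q^{t-1}}`, so `s' : Fin (t-1) → Fin Q`, and the column index
`(s', r)` of `U` is encoded by `Fin.snoc`. -/
def omegaVec {Q t : ℕ} (ht : 1 < t) (U : Matrix (Fin t → Fin Q) (Fin t → Fin Q) ℂ)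
    (s' : Fin (t - 1) → Fin Q) : (Fin (t + 1) → Fin Q) → ℂ :=
  fun v => (Real.sqrt (Q : ℝ) : ℂ)⁻¹ *
    U (fun i => v i.castSucc)
      (fun i => Fin.snoc (α := fun _ => Fin Q) s' (v (Fin.last t)) (Fin.cast (by omega : t = t - 1 + 1) i))

/-!
A standard form of `Φ` is `Φ` itself, rescaled and read as a matrix across a cut of its `2t` legs
(`k` reference legs and `n` qudits) with `t` qudits on the row side. Its product with its adjoint is
a rescaled reduced density matrix, so `t`-uniformity makes it unitary for every such cut. The
codewords `ω_{s'}` group the legs of `U` as `t - 1` against `t + 1`; moving the leg at position `p`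
across this cut gives a matrix `V` satisfying the recovery identity, and `V` is again a standard
form of `Φ`, for another set of `t` qudits.
-/

section Bipartite

variable {Q k n : ℕ} {ι κ ι₁ κ₁ : Type*}

/-- The state `Φ` as a matrix across the cut given by `σ`: rows are indexed by the qudits in `ι`,
columns by the reference register together with the qudits in `κ`. -/
def bipartiteMatrix (σ : ι ⊕ κ ≃ Fin n) (Φ : (Fin k → Fin Q) → (Fin n → Fin Q) → ℂ) :
    Matrix (ι → Fin Q) ((Fin k → Fin Q) × (κ → Fin Q)) ℂ :=
  Matrix.of fun x su => Φ su.1 (Sum.elim x su.2 ∘ σ.symm)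

theorem rdm_eq_bipartiteMatrix_mul_conjTranspose
    (Φ : (Fin k → Fin Q) → (Fin n → Fin Q) → ℂ) (A : Finset (Fin n)) :
    rdm Φ A = bipartiteMatrix (Equiv.sumCompl (· ∈ A)) Φ *
      (bipartiteMatrix (Equiv.sumCompl (· ∈ A)) Φ).conjTranspose := by
  have mergeOn_eq (u : {i // i ∈ A} → Fin Q) (w : {i // i ∉ A} → Fin Q) :
      mergeOn A u w = Sum.elim u w ∘ (Equiv.sumCompl (· ∈ A)).symm := by
    funext i
    by_cases hi : i ∈ A <;> simp [mergeOn, hi]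
  ext u v
  simp only [rdm, Matrix.of_apply, mergeOn_eq, Matrix.mul_apply, Fintype.sum_prod_type,
    bipartiteMatrix, Matrix.conjTranspose_apply, starRingEnd_apply]

theorem bipartiteMatrix_sumCongr_trans (a : ι ≃ ι₁) (b : κ ≃ κ₁) (σ : ι₁ ⊕ κ₁ ≃ Fin n)
    (Φ : (Fin k → Fin Q) → (Fin n → Fin Q) → ℂ) :
    bipartiteMatrix ((a.sumCongr b).trans σ) Φ =
      (bipartiteMatrix σ Φ).submatrix (a.arrowCongr (Equiv.refl _))
        ((Equiv.refl _).prodCongr (b.arrowCongr (Equiv.refl _))) := by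
  ext x su
  simp only [bipartiteMatrix, Matrix.of_apply, Matrix.submatrix_apply]
  congr 1
  funext i
  rcases h : σ.symm i with j | j <;> simp [h]

theorem exists_eq_sumCongr_trans_sumCompl {α : Type*} [Finite α] [DecidableEq α]
    (σ : ι ⊕ κ ≃ α) :
    ∃ (A : Finset α) (a : ι ≃ {i // i ∈ A}) (b : κ ≃ {i // i ∉ A}),
      σ = (a.sumCongr b).trans (Equiv.sumCompl (· ∈ A)) := by
  have := Fintype.ofFinite α
  let A := Finset.univ.filter fun i => (σ.symm i).isLeft
  let a : ι ≃ {i // i ∈ A} :=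
    { toFun := fun x => ⟨σ (Sum.inl x), by simp [A]⟩
      invFun := fun i => (σ.symm i).getLeft (Finset.mem_filter.mp i.2).2
      left_inv := fun x => by simp
      right_inv := fun i => by simp }
  let b : κ ≃ {i // i ∉ A} :=
    { toFun := fun y => ⟨σ (Sum.inr y), by simp [A]⟩
      invFun := fun i => (σ.symm i).getRight (by simpa [A] using i.2)
      left_inv := fun y => by simp
      right_inv := fun i => by simp }
  refine ⟨A, a, b, Equiv.ext ?_⟩
  rintro (x | y) <;> rfl

theorem TUniform.bipartiteMatrix_mul_conjTranspose [Fintype ι] [Fintype κ] [DecidableEq κ]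
    {Φ : (Fin k → Fin Q) → (Fin n → Fin Q) → ℂ} (hΦ : TUniform (Fintype.card ι) Φ)
    (σ : ι ⊕ κ ≃ Fin n) :
    bipartiteMatrix σ Φ * (bipartiteMatrix σ Φ).conjTranspose =
      ((Q : ℂ) ^ Fintype.card ι)⁻¹ • (1 : Matrix (ι → Fin Q) (ι → Fin Q) ℂ) := by
  obtain ⟨A, a, b, rfl⟩ := exists_eq_sumCongr_trans_sumCompl σ
  have hA : A.card = Fintype.card ι := by simpa using (Fintype.card_congr a).symm
  rw [bipartiteMatrix_sumCongr_trans, Matrix.conjTranspose_submatrix, Matrix.submatrix_mul_equiv,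
    ← rdm_eq_bipartiteMatrix_mul_conjTranspose, hΦ A hA, Matrix.submatrix_smul]
  simp only [Pi.smul_apply, Matrix.submatrix_one_equiv]

end Bipartite

section StandardForm

variable {Q k l n t : ℕ}

/-- `U` is a standard form of `Φ` for the enumeration `σ` of the qudits: the rows of `U` carry the
first `t` qudits, its columns the reference register followed by the last `l` qudits. A set `T` of
qudits enters through the enumeration listing `T` and then `Tᶜ`; `U` is not required to be
unitary. -/
def IsStandardForm (h : t = k + l) (σ : Fin t ⊕ Fin l ≃ Fin n)
    (Φ : (Fin k → Fin Q) → (Fin n → Fin Q) → ℂ)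
    (U : Matrix (Fin t → Fin Q) (Fin t → Fin Q) ℂ) : Prop :=
  ∀ (s : Fin k → Fin Q) (w : Fin n → Fin Q),
    Φ s w = (Real.sqrt ((Q : ℝ) ^ t) : ℂ)⁻¹ *
      U (fun i => w (σ (Sum.inl i)))
        (fun i => Fin.append s (fun j => w (σ (Sum.inr j))) (Fin.cast h i))

theorem IsStandardForm.bipartiteMatrix_eq {σ : Fin (k + l) ⊕ Fin l ≃ Fin n}
    {Φ : (Fin k → Fin Q) → (Fin n → Fin Q) → ℂ}
    {U : Matrix (Fin (k + l) → Fin Q) (Fin (k + l) → Fin Q) ℂ}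
    (hU : IsStandardForm rfl σ Φ U) :
    bipartiteMatrix σ Φ =
      (Real.sqrt ((Q : ℝ) ^ (k + l)) : ℂ)⁻¹ • U.submatrix id (Fin.appendEquiv k l) := by
  ext x ⟨s, u⟩
  simp [bipartiteMatrix, hU s, Fin.appendEquiv]

theorem IsStandardForm.mem_unitaryGroup [NeZero Q] {h : t = k + l}
    {σ : Fin t ⊕ Fin l ≃ Fin n} {Φ : (Fin k → Fin Q) → (Fin n → Fin Q) → ℂ}
    {U : Matrix (Fin t → Fin Q) (Fin t → Fin Q) ℂ} (hU : IsStandardForm h σ Φ U)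
    (hΦ : TUniform t Φ) : U ∈ Matrix.unitaryGroup (Fin t → Fin Q) ℂ := by
  subst h
  have hQ : ((Q : ℂ) ^ (k + l))⁻¹ ≠ 0 := inv_ne_zero (pow_ne_zero _ (NeZero.ne _))
  have sqrt_mul_sqrt : (Real.sqrt ((Q : ℝ) ^ (k + l)) : ℂ)⁻¹ *
      (Real.sqrt ((Q : ℝ) ^ (k + l)) : ℂ)⁻¹ = ((Q : ℂ) ^ (k + l))⁻¹ := by
    rw [← mul_inv, ← Complex.ofReal_mul, Real.mul_self_sqrt (by positivity)]
    push_cast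
    rfl
  have hUU := TUniform.bipartiteMatrix_mul_conjTranspose (ι := Fin (k + l)) (by simpa using hΦ) σ
  rw [hU.bipartiteMatrix_eq, Matrix.conjTranspose_smul, Matrix.conjTranspose_submatrix,
    Matrix.smul_mul, Matrix.mul_smul, Matrix.submatrix_mul_equiv, Matrix.submatrix_id_id,
    smul_smul, star_inv₀, Complex.star_def, Complex.conj_ofReal, sqrt_mul_sqrt,
    Fintype.card_fin] at hUU
  exact Matrix.mem_unitaryGroup_iff.mpr (smul_right_injective _ hQ hUU)

end StandardForm

section ExchangeLeg

variable {k n r : ℕ}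

/-- The matrix obtained from `U` by joining its last column leg to its row legs, as the last one,
and then splitting off the leg at position `p` to become the last column leg. -/
def exchangeLeg {α R : Type*} (p : Fin (r + 2)) (U : Matrix (Fin (r + 1) → α) (Fin (r + 1) → α) R) :
    Matrix (Fin (r + 1) → α) (Fin (r + 1) → α) R :=
  Matrix.of fun x c =>
    let v : Fin (r + 2) → α := p.insertNth (c (Fin.last r)) x
    U (Fin.init v) (Fin.snoc (Fin.init c) (v (Fin.last (r + 1))))

theorem exchangeLeg_removeNth_snoc {α R : Type*} (p : Fin (r + 2))
    (U : Matrix (Fin (r + 1) → α) (Fin (r + 1) → α) R) (s : Fin r → α) (v : Fin (r + 2) → α) :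
    exchangeLeg p U (p.removeNth v) (Fin.snoc s (v p)) =
      U (Fin.init v) (Fin.snoc s (v (Fin.last (r + 1)))) := by
  simp [exchangeLeg]

/-- The relabelling of legs that singles out position `p` among `r + 2` row legs and makes it the
last column leg. -/
def splitLegEquiv (m : ℕ) (p : Fin (r + 2)) :
    Fin (r + 1) ⊕ Fin (m + 1) ≃ Fin (r + 2) ⊕ Fin m :=
  Equiv.ofBijective
    (Sum.elim (fun i => Sum.inl (p.succAbove i)) (Fin.snoc (fun j => Sum.inr j) (Sum.inl p))) <| by
    rw [Fintype.bijective_iff_surjective_and_card]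
    refine ⟨?_, by simp only [Fintype.card_sum, Fintype.card_fin]; omega⟩
    rintro (i | j)
    · rcases p.eq_self_or_eq_succAbove i with rfl | ⟨i, rfl⟩
      · exact ⟨Sum.inr (Fin.last m), by simp⟩
      · exact ⟨Sum.inl i, rfl⟩
    · exact ⟨Sum.inr j.castSucc, by simp⟩

theorem IsStandardForm.exchangeLeg {Q m : ℕ} {h : r + 1 = k + (m + 1)}
    {τ : Fin (r + 2) ⊕ Fin m ≃ Fin n} {Φ : (Fin k → Fin Q) → (Fin n → Fin Q) → ℂ}
    {U : Matrix (Fin (r + 1) → Fin Q) (Fin (r + 1) → Fin Q) ℂ}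
    (hU : IsStandardForm h ((splitLegEquiv m (Fin.last _)).trans τ) Φ U) (p : Fin (r + 2)) :
    IsStandardForm h ((splitLegEquiv m p).trans τ) Φ (exchangeLeg p U) := by
  obtain rfl : r = k + m := by omega
  intro s w
  let v : Fin (k + m + 2) → Fin Q := fun i => w (τ (Sum.inl i))
  have columns (q : Fin (k + m + 2)) :
      Fin.append s (fun j => w (((splitLegEquiv m q).trans τ) (Sum.inr j))) =
        Fin.snoc (α := fun _ => Fin Q) (Fin.append s fun j => w (τ (Sum.inr j))) (v q) := by
    rw [← Fin.append_snoc]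
    congr 1
    funext j
    refine Fin.lastCases ?_ (fun j => ?_) j <;> simp [splitLegEquiv, v]
  have exchange := exchangeLeg_removeNth_snoc p U (Fin.append s fun j => w (τ (Sum.inr j))) v
  rw [← Fin.removeNth_last, ← columns p, ← columns (Fin.last _)] at exchange
  rw [hU s w]
  exact congrArg _ exchange.symm

end ExchangeLeg

theorem stmt_3_general {Q k l n r : ℕ} [NeZero Q] (hl : 0 < l) {h : r + 1 = k + l}
    {σ : Fin (r + 1) ⊕ Fin l ≃ Fin n} {Φ : (Fin k → Fin Q) → (Fin n → Fin Q) → ℂ}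
    (hΦ : TUniform (r + 1) Φ) {U : Matrix (Fin (r + 1) → Fin Q) (Fin (r + 1) → Fin Q) ℂ}
    (hU : IsStandardForm h σ Φ U) (p : Fin (r + 2)) :
    ∃ V ∈ Matrix.unitaryGroup (Fin (r + 1) → Fin Q) ℂ,
      ∀ (s : Fin r → Fin Q) (v : Fin (r + 2) → Fin Q),
        U (Fin.init v) (Fin.snoc s (v (Fin.last (r + 1)))) =
          V (p.removeNth v) (Fin.snoc s (v p)) := by
  obtain ⟨m, rfl⟩ := Nat.exists_eq_add_one.mpr hl
  obtain ⟨τ, rfl⟩ : ∃ τ, σ = (splitLegEquiv m (Fin.last _)).trans τ :=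
    ⟨(splitLegEquiv m (Fin.last _)).symm.trans σ, by simp [← Equiv.trans_assoc]⟩
  exact ⟨exchangeLeg p U, (hU.exchangeLeg p).mem_unitaryGroup hΦ,
    fun s v => (exchangeLeg_removeNth_snoc p U s v).symm⟩

/-- recovery identity in the proof of Lemma 2.6.  The logical content of the
`[[t+1, t-1]]_Q` code with codewords `ω_{s'}` can be recovered from any `t` of its `t+1`
physical qudits: for every position `p` with `p ≤ t` (i.e. `p ∈ {1,…,t}`) there is a unitary
`V` acting only on the remaining `t` qudits with
`ω_{s'} = Q^{-1/2} Σ_f σ_p (V (e_{s'} ⊗ e_f) ⊗ e_f)`, where `σ_p` places `e_f` at position `p`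
and the qudits of `V(e_{s'} ⊗ e_f)` at the other positions in increasing order. -/
theorem stmt_3 (Q t n : ℕ) (hQ : 2 ≤ Q) (ht : 1 < t) (htn : t < n) (hn : n ≤ 2 * t)
    (k : ℕ) (hk : k = 2 * t - n)
    (Φ : (Fin k → Fin Q) → (Fin n → Fin Q) → ℂ)
    (hnorm : ∑ s : Fin k → Fin Q, ∑ w : Fin n → Fin Q,
      Φ s w * (starRingEnd ℂ) (Φ s w) = 1)
    (huniform : TUniform t Φ)
    (T : Finset (Fin n)) (hT : T.card = t) (hTc : Tᶜ.card = n - t)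
    (U : Matrix (Fin t → Fin Q) (Fin t → Fin Q) ℂ)
    (hUuni : U ∈ Matrix.unitaryGroup (Fin t → Fin Q) ℂ)
    (hUstd : ∀ (s : Fin k → Fin Q) (w : Fin n → Fin Q),
      Φ s w = (Real.sqrt ((Q : ℝ) ^ t) : ℂ)⁻¹ *
        U (fun i => w (T.orderEmbOfFin hT i))
          (fun i => Fin.append s (fun j => w (Tᶜ.orderEmbOfFin hTc j))
            (Fin.cast (by omega : t = k + (n - t)) i)))
    (p : Fin (t + 1)) (hp : (p : ℕ) < t) :
    ∃ V : Matrix (Fin t → Fin Q) (Fin t → Fin Q) ℂ,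
      V ∈ Matrix.unitaryGroup (Fin t → Fin Q) ℂ ∧
      ∀ (s' : Fin (t - 1) → Fin Q) (v : Fin (t + 1) → Fin Q),
        omegaVec ht U s' v = (Real.sqrt (Q : ℝ) : ℂ)⁻¹ *
          V (fun i => v (p.succAbove i))
            (fun i => Fin.snoc (α := fun _ => Fin Q) s' (v p)
              (Fin.cast (by omega : t = t - 1 + 1) i)) := by
  obtain ⟨r, rfl⟩ : ∃ r, t = r + 1 := ⟨t - 1, by omega⟩
  have : NeZero Q := ⟨by omega⟩
  have hstd : IsStandardForm (by omega) (finSumEquivOfFinset hT hTc) Φ U := by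
    simpa only [IsStandardForm, finSumEquivOfFinset_inl, finSumEquivOfFinset_inr] using hUstd
  obtain ⟨V, hV, hVU⟩ := stmt_3_general (by omega) huniform hstd p
  exact ⟨V, hV, fun s' v => congrArg _ (hVU s' v)⟩
end
end

section
/- Let Φ be a t-uniform purified code state with t ≥ 2, let T ⊆ {1,…,n−1} with |T| = t (qudit n is the last coordinate of T^c), and let U be a T-standard-form unitary for Φ. Let G_1,…,G_{n−t−1} be any unitaries on ℂ^Q, ε ∈ ℂ^Q a unit vector, and Ū the entrywise complex conjugate of U. Define ψ_out := Q^{−t/2} Σ_{s ∈ {0,…,Q−1}^k} Σ_{r ∈ {0,…,Q−1}^{n−t}} U(e_s ⊗ e_{r_1} ⊗ ⋯ ⊗ e_{r_{n−t}}) ⊗ e_{r_{n−t}} ⊗ Ū(e_s ⊗ G_1^† e_{r_1} ⊗ ⋯ ⊗ G_{n−t−1}^† e_{r_{n−t−1}} ⊗ ε), a state on 2t+1 qudits: t qudits W_1,…,W_t carrying the first factor, one qudit Ŵ, and t qudits W_1',…,W_t' carrying the last factor (where ℂ^{Q^k} ⊗ (ℂ^Q)^{⊗(n−t)} is identified with (ℂ^Q)^{⊗t}).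 Then for every j ∈ {1,…,t}, the Schmidt rank of ψ_out across the bipartition ({W_j, W_j'} | all other qudits) equals Q² (Lemma 3.6). -/
open scoped BigOperators

noncomputable section

/-- The state `ψ_out` of Lemma 3.6, in amplitude form, with
`ℂ^{Q^k} ⊗ (ℂ^Q)^{⊗(n-t)}` identified with `(ℂ^Q)^{⊗t}` (via `Fin.append` and the
equality `h1 : t = k + (n - t)`). Registers: the `t` qudits `W_1,…,W_t` (index `a`), the
replacement qudit `Ŵ` (index `x`), and the `t` qudits `W_1',…,W_t'` (index `b`).
`ψ_out = Q^{-t/2} Σ_{s,r} U(e_s ⊗ e_{r_1} ⊗ ⋯ ⊗ e_{r_{n-t}}) ⊗ e_{r_{n-t}} ⊗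
Ū(e_s ⊗ G_1† e_{r_1} ⊗ ⋯ ⊗ G_{n-t-1}† e_{r_{n-t-1}} ⊗ ε)`, where `Ū` is the entrywise
conjugate of `U` and `lst` is the last coordinate of `Fin (n - t)`. -/
def psiOutStd (Q t n k : ℕ) (h1 : t = k + (n - t))
    (U : Matrix (Fin t → Fin Q) (Fin t → Fin Q) ℂ)
    (G : Fin (n - t - 1) → Matrix (Fin Q) (Fin Q) ℂ)
    (ε : Fin Q → ℂ) (lst : Fin (n - t)) :
    (Fin t → Fin Q) → Fin Q → (Fin t → Fin Q) → ℂ :=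
  fun a x b =>
    (Real.sqrt ((Q : ℝ) ^ t) : ℂ)⁻¹ *
      ∑ s : Fin k → Fin Q, ∑ r : Fin (n - t) → Fin Q, ∑ y : Fin (n - t) → Fin Q,
        U a (fun i => Fin.append s r (Fin.cast h1 i)) * (if r lst = x then 1 else 0) *
          (starRingEnd ℂ) (U b (fun i => Fin.append s y (Fin.cast h1 i))) *
          ∏ i : Fin (n - t),
            if h : (i : ℕ) < n - t - 1 then (starRingEnd ℂ) ((G ⟨i, h⟩) (r i) (y i))
            else ε (y i)

/-- Insert the value `x` at the position `j` of a partial assignment defined away from `j`. -/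
def insAt {Q t : ℕ} (j : Fin t) (x : Fin Q) (a : {i : Fin t // i ≠ j} → Fin Q) :
    Fin t → Fin Q :=
  fun i => if h : i = j then x else a ⟨i, h⟩

/-
Up to a scalar, `ψ_out` is the contraction of `Φ` with its conjugate over the reference register
and the strings `r`. Exchanging `W_j` for qudit `n` gives another set of `t` qudits, so the
corresponding amplitude matrix of `Φ` is square and invertible: seen from there, its sections at
`(p, s, r)` are linearly independent, where `p` is the value at `W_j`. In the conjugate copy,
`{W_j, qudit n}` has at most `t` qudits, so its sections at `(q, z)` are independent, and they
remain so after contracting `z` with `ε ≠ 0` and applying the invertible `⨂ᵢ Ḡᵢ`. Contracting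
an independent family over `(s, r)` with the second copy keeps the `Q²` rows `(p, q)` independent.
-/

section LinearAlgebra

variable {R ι κ σ β M : Type*}

theorem linearIndependent_col_of_row [Field R] [Fintype ι] [Fintype κ] {A : Matrix ι κ R}
    (hcard : Fintype.card ι = Fintype.card κ) (hA : LinearIndependent R A.row) :
    LinearIndependent R A.col := by
  rw [linearIndependent_iff_card_eq_finrank_span, Set.finrank,
    ← Matrix.rank_eq_finrank_span_cols, hA.rank_matrix, hcard]

theorem linearIndependent_sum_smul_right [CommRing R] [NoZeroDivisors R] [AddCommGroup M]
    [Module R M] [Finite ι] [Fintype κ] {v : ι × κ → M} (hv : LinearIndependent R v)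
    {ε : κ → R} (hε : ε ≠ 0) :
    LinearIndependent R fun i => ∑ z, ε z • v (i, z) := by
  cases nonempty_fintype ι
  rw [Fintype.linearIndependent_iff]
  intro g hg i
  obtain ⟨z, hz⟩ := Function.ne_iff.mp hε
  have hcoeff := Fintype.linearIndependent_iff.mp hv (fun p => g p.1 * ε p.2)
    (by simpa only [Fintype.sum_prod_type, Finset.smul_sum, mul_smul] using hg) (i, z)
  exact (mul_eq_zero.mp hcoeff).resolve_right hz

theorem linearIndependent_contract [CommRing R] [AddCommGroup M] [Module R M] [Finite ι]
    [Finite κ] [Fintype σ] {v : ι × σ → M} (hv : LinearIndependent R v)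
    {f : κ → β → σ → R} (hf : LinearIndependent R f) :
    LinearIndependent R fun (i : ι × κ) (b : β) => ∑ x, f i.2 b x • v (i.1, x) := by
  cases nonempty_fintype ι
  cases nonempty_fintype κ
  rw [Fintype.linearIndependent_iff] at hv ⊢
  rintro g hg ⟨i, q⟩
  refine Fintype.linearIndependent_iff.mp hf (fun q => g (i, q)) ?_ q
  ext b x
  have hcoeff := hv (fun p => ∑ q, g (p.1, q) * f q b p.2) ?_ (i, x)
  · simpa [Finset.sum_apply] using hcoeff
  · have hb := congrFun hg b
    simp only [Finset.sum_apply, Pi.smul_apply, Fintype.sum_prod_type, Pi.zero_apply,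
      Finset.smul_sum, Finset.sum_smul, mul_smul] at hb ⊢
    rw [← hb]
    exact Finset.sum_congr rfl fun i _ => Finset.sum_comm

theorem linearIndependent_mulVec [CommRing R] {S τ ρ : Type*} [Fintype τ] {A : Matrix ρ τ R}
    (hA : Function.Injective A.mulVec) {f : κ → β → S → τ → R} (hf : LinearIndependent R f) :
    LinearIndependent R fun (q : κ) (b : β) (x : S × ρ) => A.mulVec (f q b x.1) x.2 := by
  let applyA : (β → S → τ → R) →ₗ[R] (β → S × ρ → R) :=
    { toFun f b x := A.mulVec (f b x.1) x.2
      map_add' _ _ := by ext; simp [Matrix.mulVec_add]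
      map_smul' _ _ := by ext; simp [Matrix.mulVec_smul] }
  have hinj : Function.Injective applyA := fun f g hfg =>
    funext₂ fun b x => hA (funext fun r => congrFun₂ hfg b (x, r))
  exact hf.map' applyA (LinearMap.ker_eq_bot.mpr hinj)

end LinearAlgebra

section PiKronecker

variable {R ι : Type*} {κ : ι → Type*} [CommRing R] [Fintype ι] [DecidableEq ι]
  [∀ i, Fintype (κ i)] [∀ i, DecidableEq (κ i)]

/-- The tensor product `⨂ᵢ Aᵢ` of a finite family of square matrices, in the basis of strings
`r : ∀ i, κ i`, as a monoid homomorphism. -/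
def piKronecker : (∀ i, Matrix (κ i) (κ i) R) →* Matrix (∀ i, κ i) (∀ i, κ i) R where
  toFun A := Matrix.of fun r y => ∏ i, A i (r i) (y i)
  map_one' := by
    ext r y
    simp [Matrix.one_apply, Finset.prod_ite_zero, funext_iff]
  map_mul' A B := by
    ext r y
    simp [Matrix.mul_apply, Finset.prod_univ_sum, ← Finset.prod_mul_distrib]

theorem piKronecker_apply (A : ∀ i, Matrix (κ i) (κ i) R) (r y : ∀ i, κ i) :
    piKronecker A r y = ∏ i, A i (r i) (y i) :=
  rfl

theorem isUnit_piKronecker {A : ∀ i, Matrix (κ i) (κ i) R} (hA : ∀ i, IsUnit (A i)) :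
    IsUnit (piKronecker A) :=
  (Pi.isUnit_iff.mpr hA).map piKronecker

end PiKronecker

section Uniform

variable {Q k n t : ℕ} {Φ : (Fin k → Fin Q) → (Fin n → Fin Q) → ℂ}

/-- The amplitudes of `Φ` as a matrix across the bipartition (qudits in `A` | reference register
and qudits outside `A`). -/
def codeMatrix (Φ : (Fin k → Fin Q) → (Fin n → Fin Q) → ℂ) (A : Finset (Fin n)) :
    Matrix ({i // i ∈ A} → Fin Q) ((Fin k → Fin Q) × ({i // i ∉ A} → Fin Q)) ℂ :=
  Matrix.of fun u p => Φ p.1 (mergeOn A u p.2)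

theorem codeMatrix_mul_conjTranspose (A : Finset (Fin n)) :
    codeMatrix Φ A * (codeMatrix Φ A).conjTranspose = rdm Φ A := by
  ext u v
  simp [codeMatrix, rdm, Matrix.mul_apply, Fintype.sum_prod_type]

namespace TUniform

theorem conj (hΦ : TUniform t Φ) : TUniform t fun s w => starRingEnd ℂ (Φ s w) := by
  intro A hA
  have hconj : rdm (fun s w => starRingEnd ℂ (Φ s w)) A = (rdm Φ A).map (starRingEnd ℂ) := by
    ext u v
    simp [rdm]
  rw [hconj, hΦ A hA]
  ext u v
  by_cases huv : u = v <;> simp [huv]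

variable [NeZero Q]

open scoped ComplexOrder in
theorem linearIndependent_row_codeMatrix (hΦ : TUniform t Φ) {A : Finset (Fin n)}
    (hA : A.card = t) : LinearIndependent ℂ (codeMatrix Φ A).row := by
  have hrank : (codeMatrix Φ A).rank = Fintype.card ({i // i ∈ A} → Fin Q) := by
    rw [← Matrix.rank_self_mul_conjTranspose, codeMatrix_mul_conjTranspose, hΦ A hA,
      Matrix.smul_one_eq_diagonal, Matrix.rank_diagonal]
    simp [NeZero.ne Q]
  rw [linearIndependent_iff_card_eq_finrank_span, ← hrank, Matrix.rank_eq_finrank_span_row]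
  rfl

theorem linearIndependent_col_codeMatrix (hΦ : TUniform t Φ) (hkt : t = k + (n - t))
    {A : Finset (Fin n)} (hA : A.card = t) : LinearIndependent ℂ (codeMatrix Φ A).col := by
  refine linearIndependent_col_of_row ?_ (hΦ.linearIndependent_row_codeMatrix hA)
  have hAc : Fintype.card {i // i ∉ A} = n - t := by
    rw [Fintype.card_subtype_compl, Fintype.card_coe, Fintype.card_fin, hA]
  rw [Fintype.card_prod, Fintype.card_fun, Fintype.card_fun, Fintype.card_fun, hAc,
    Fintype.card_coe, Fintype.card_fin, Fintype.card_fin, hA, ← pow_add, ← hkt]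

theorem linearIndependent_piecewise_left (hΦ : TUniform t Φ) (htn : t ≤ n) {B : Finset (Fin n)}
    (hB : B.card ≤ t) {ι : Type*} {u : ι → Fin n → Fin Q}
    (hu : ∀ x y, (∀ i ∈ B, u x i = u y i) → x = y) :
    LinearIndependent ℂ fun x s w => Φ s (B.piecewise (u x) w) := by
  obtain ⟨A, hBA, hA⟩ := Finset.exists_superset_card_eq hB (by simpa using htn)
  have hinj : Function.Injective
      fun x (i : {i // i ∈ A}) => B.piecewise (u x) (fun _ => 0) i := by
    intro x y hxy
    refine hu x y fun i hi => ?_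
    simpa [hi] using congrFun hxy ⟨i, hBA hi⟩
  let restrict : ((Fin k → Fin Q) → (Fin n → Fin Q) → ℂ) →ₗ[ℂ]
      ((Fin k → Fin Q) × ({i // i ∉ A} → Fin Q) → ℂ) :=
    { toFun f p := f p.1 (mergeOn A 0 p.2)
      map_add' _ _ := rfl
      map_smul' _ _ := rfl }
  refine .of_comp restrict ?_
  convert (hΦ.linearIndependent_row_codeMatrix hA).comp _ hinj
  ext x p
  refine congrArg (Φ p.1) (funext fun i => ?_)
  by_cases hiB : i ∈ B
  · simp [mergeOn, hiB, hBA hiB]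
  · simp [mergeOn, hiB]

theorem linearIndependent_piecewise_right (hΦ : TUniform t Φ) (hkt : t = k + (n - t))
    {A : Finset (Fin n)} (hA : A.card = t) {ι : Type*} {s : ι → Fin k → Fin Q}
    {w : ι → Fin n → Fin Q} (hsw : ∀ x y, s x = s y → (∀ i ∉ A, w x i = w y i) → x = y) :
    LinearIndependent ℂ fun x u => Φ (s x) (A.piecewise u (w x)) := by
  have hinj : Function.Injective fun x => (s x, fun i : {i // i ∉ A} => w x i) := by
    intro x y hxy
    obtain ⟨hs, hw⟩ := Prod.ext_iff.mp hxy
    exact hsw x y hs fun i hi => congrFun hw ⟨i, hi⟩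
  refine .of_comp (LinearMap.funLeft ℂ ℂ fun u : {i // i ∈ A} → Fin Q => mergeOn A u 0) ?_
  convert (hΦ.linearIndependent_col_codeMatrix hkt hA).comp _ hinj
  ext x u
  refine congrArg (Φ (s x)) (funext fun i => ?_)
  by_cases hi : i ∈ A <;> simp [mergeOn, hi]

end TUniform

end Uniform

section SplitStrings

variable {Q k n t m : ℕ}

theorem sum_eq_sum_sum_insAt {R : Type*} [AddCommMonoid R] (l : Fin m)
    (f : (Fin m → Fin Q) → R) : ∑ r, f r = ∑ x, ∑ r', f (insAt l x r') := by
  rw [← (Equiv.funSplitAt l (Fin Q)).symm.sum_comp, Fintype.sum_prod_type]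
  refine Finset.sum_congr rfl fun x _ => Finset.sum_congr rfl fun r' _ => congrArg f ?_
  ext i
  by_cases hi : i = l <;> simp [insAt, Equiv.funSplitAt, Equiv.piSplitAt, hi]

variable (e : Fin t ⊕ Fin m ≃ Fin n) (j : Fin t) (l : Fin m)

/-- The string on `n` qudits, split by `e` into two blocks, with value `p` at the qudit `j` of the
first block, `x` at the qudit `l` of the second block, and `a`, `r` at the remaining qudits of the
first and second block. -/
def joinString (p : Fin Q) (a : {i // i ≠ j} → Fin Q) (x : Fin Q) (r : {i // i ≠ l} → Fin Q) :
    Fin n → Fin Q :=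
  Sum.elim (insAt j p a) (insAt l x r) ∘ e.symm

/-- The first block of qudits with its member `j` exchanged for the member `l` of the second
block. -/
def exchangeSet : Finset (Fin n) :=
  ((Finset.univ.erase j).disjSum {l}).map e.toEmbedding

theorem card_exchangeSet : (exchangeSet e j l).card = t := by
  have ht : 0 < t := j.pos
  simp only [exchangeSet, Finset.card_map, Finset.card_disjSum, Finset.card_erase_of_mem,
    Finset.mem_univ, Finset.card_univ, Fintype.card_fin, Finset.card_singleton]
  omega

theorem exchangeSet_piecewise_joinString (u : Fin n → Fin Q) (p : Fin Q)
    (a : {i // i ≠ j} → Fin Q) (x : Fin Q) (r : {i // i ≠ l} → Fin Q) :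
    (exchangeSet e j l).piecewise u (joinString e j l p a x r) =
      joinString e j l p (fun i => u (e (Sum.inl i))) (u (e (Sum.inr l))) r := by
  ext i
  obtain ⟨i | i, rfl⟩ := e.surjective i
  · by_cases hi : i = j <;> simp [exchangeSet, joinString, insAt, Finset.piecewise, hi]
  · by_cases hi : i = l <;> simp [exchangeSet, joinString, insAt, Finset.piecewise, hi]

theorem pair_piecewise_joinString (w : Fin n → Fin Q) (p : Fin Q)
    (a : {i // i ≠ j} → Fin Q) (x : Fin Q) (r : {i // i ≠ l} → Fin Q) :
    ({e (Sum.inl j), e (Sum.inr l)} : Finset (Fin n)).piecewise (joinString e j l p a x r) w =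
      joinString e j l p (fun i => w (e (Sum.inl i))) x (fun i => w (e (Sum.inr i))) := by
  ext i
  obtain ⟨i | i, rfl⟩ := e.surjective i
  · by_cases hi : i = j <;> simp [joinString, insAt, Finset.piecewise, hi]
  · by_cases hi : i = l <;> simp [joinString, insAt, Finset.piecewise, hi]

variable {Φ : (Fin k → Fin Q) → (Fin n → Fin Q) → ℂ} [NeZero Q]

theorem TUniform.linearIndependent_joinString_pair (hΦ : TUniform t Φ) (ht : 2 ≤ t)
    (htn : t ≤ n) :
    LinearIndependent ℂ fun (i : Fin Q × Fin Q) b s y => Φ s (joinString e j l i.1 b i.2 y) := by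
  let observe : (({i // i ≠ j} → Fin Q) → (Fin k → Fin Q) → ({i // i ≠ l} → Fin Q) → ℂ) →ₗ[ℂ]
      ((Fin k → Fin Q) → (Fin n → Fin Q) → ℂ) :=
    { toFun f s w := f (fun i => w (e (Sum.inl i))) s (fun i => w (e (Sum.inr i)))
      map_add' _ _ := rfl
      map_smul' _ _ := rfl }
  refine .of_comp observe ?_
  have hLI := hΦ.linearIndependent_piecewise_left htn
    (B := {e (Sum.inl j), e (Sum.inr l)}) (Finset.card_le_two.trans ht)
    (u := fun i : Fin Q × Fin Q => joinString e j l i.1 0 i.2 0) ?_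
  · simp only [pair_piecewise_joinString] at hLI
    exact hLI
  · intro x y hxy
    have hj := hxy (e (Sum.inl j)) (by simp)
    have hl := hxy (e (Sum.inr l)) (by simp)
    exact Prod.ext (by simpa [joinString, insAt] using hj) (by simpa [joinString, insAt] using hl)

theorem TUniform.linearIndependent_joinString_exchange (hΦ : TUniform t Φ)
    (hkt : t = k + (n - t)) :
    LinearIndependent ℂ fun (i : Fin Q × (Fin k → Fin Q) × ({i // i ≠ l} → Fin Q))
      (o : ({i // i ≠ j} → Fin Q) × Fin Q) => Φ i.2.1 (joinString e j l i.1 o.1 o.2 i.2.2) := by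
  have hLI := hΦ.linearIndependent_piecewise_right hkt (card_exchangeSet e j l)
    (s := fun i : Fin Q × (Fin k → Fin Q) × ({i // i ≠ l} → Fin Q) => i.2.1)
    (w := fun i => joinString e j l i.1 0 0 i.2.2) ?_
  · simp only [exchangeSet_piecewise_joinString] at hLI
    exact .of_comp (LinearMap.funLeft ℂ ℂ fun u : Fin n → Fin Q =>
      (fun i : {i // i ≠ j} => u (e (Sum.inl i)), u (e (Sum.inr l)))) hLI
  · rintro ⟨p, s, r⟩ ⟨p', s', r'⟩ hs h
    have hj := h (e (Sum.inl j)) (by simp [exchangeSet])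
    have hp : p = p' := by simpa [joinString, insAt] using hj
    have hr : r = r' := funext fun i => by
      simpa [joinString, insAt, i.2] using h (e (Sum.inr i)) (by simp [exchangeSet, i.2])
    exact Prod.ext hp (Prod.ext hs hr)

end SplitStrings

section PsiOut

variable {Q k n t : ℕ}

/-- The entrywise conjugates of the gates `G`, indexed by the coordinates of `Fin (n - t)` other
than the last coordinate `l`. -/
def conjGates (G : Fin (n - t - 1) → Matrix (Fin Q) (Fin Q) ℂ) {l : Fin (n - t)}
    (hl : (l : ℕ) = n - t - 1) (i : {i // i ≠ l}) : Matrix (Fin Q) (Fin Q) ℂ :=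
  (G ⟨i, by have := i.1.isLt; have := Fin.val_ne_of_ne i.2; omega⟩).map (starRingEnd ℂ)

theorem isUnit_conjGates {G : Fin (n - t - 1) → Matrix (Fin Q) (Fin Q) ℂ}
    (hG : ∀ i, IsUnit (G i)) {l : Fin (n - t)} (hl : (l : ℕ) = n - t - 1) (i : {i // i ≠ l}) :
    IsUnit (conjGates G hl i) :=
  (hG _).map (starRingEnd ℂ).mapMatrix

theorem prod_gates_insAt (G : Fin (n - t - 1) → Matrix (Fin Q) (Fin Q) ℂ) (ε : Fin Q → ℂ)
    {l : Fin (n - t)} (hl : (l : ℕ) = n - t - 1) (x z : Fin Q) (r y : {i // i ≠ l} → Fin Q) :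
    (∏ i : Fin (n - t), if h : (i : ℕ) < n - t - 1 then
      (starRingEnd ℂ) ((G ⟨i, h⟩) (insAt l x r i) (insAt l z y i)) else ε (insAt l z y i)) =
      ε z * piKronecker (conjGates G hl) r y := by
  rw [Fintype.prod_eq_mul_prod_subtype_ne _ l, piKronecker_apply]
  congr 1
  · simp [hl, insAt]
  · refine Finset.prod_congr rfl fun i _ => ?_
    have hi : (i : ℕ) < n - t - 1 := by
      have := i.1.isLt
      have := Fin.val_ne_of_ne i.2
      omega
    simp [hi, insAt, i.2, conjGates]

theorem psiOutStd_insAt (hkt : t = k + (n - t))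
    {U : Matrix (Fin t → Fin Q) (Fin t → Fin Q) ℂ}
    (G : Fin (n - t - 1) → Matrix (Fin Q) (Fin Q) ℂ) (ε : Fin Q → ℂ)
    {l : Fin (n - t)} (hl : (l : ℕ) = n - t - 1) (a b : Fin t → Fin Q) (x : Fin Q) :
    psiOutStd Q t n k hkt U G ε l a x b = (Real.sqrt ((Q : ℝ) ^ t) : ℂ)⁻¹ *
      ∑ s : Fin k → Fin Q, ∑ r, ∑ y, ∑ z,
        U a (fun i => Fin.append s (insAt l x r) (Fin.cast hkt i)) *
        (starRingEnd ℂ) (U b (fun i => Fin.append s (insAt l z y) (Fin.cast hkt i))) *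
        (ε z * piKronecker (conjGates G hl) r y) := by
  have hlast (x' : Fin Q) (r : {i // i ≠ l} → Fin Q) : insAt l x' r l = x' := by simp [insAt]
  simp only [psiOutStd, sum_eq_sum_sum_insAt l, prod_gates_insAt G ε hl, hlast,
    mul_ite, mul_one, mul_zero, ite_mul, zero_mul]
  congr 1
  refine Finset.sum_congr rfl fun s _ => ?_
  rw [Fintype.sum_eq_single x fun x' hx' => by simp only [hx', if_false, Finset.sum_const_zero]]
  simp only [if_true]
  exact Finset.sum_congr rfl fun r _ => Finset.sum_comm

theorem sqrt_natCast_pow_ne_zero (Q t : ℕ) [NeZero Q] : (Real.sqrt ((Q : ℝ) ^ t) : ℂ) ≠ 0 := by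
  exact_mod_cast (Real.sqrt_pos.mpr (pow_pos (Nat.cast_pos.mpr (NeZero.pos Q)) t)).ne'

theorem psiOutStd_eq_sum_joinString (hkt : t = k + (n - t))
    {Φ : (Fin k → Fin Q) → (Fin n → Fin Q) → ℂ} {e : Fin t ⊕ Fin (n - t) ≃ Fin n}
    {U : Matrix (Fin t → Fin Q) (Fin t → Fin Q) ℂ}
    (hU : ∀ s a r, U a (fun i => Fin.append s r (Fin.cast hkt i)) =
      Real.sqrt ((Q : ℝ) ^ t) * Φ s (Sum.elim a r ∘ e.symm))
    (G : Fin (n - t - 1) → Matrix (Fin Q) (Fin Q) ℂ) (ε : Fin Q → ℂ)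
    {l : Fin (n - t)} (hl : (l : ℕ) = n - t - 1) (j : Fin t) (p q : Fin Q)
    (b : {i // i ≠ j} → Fin Q) :
    (fun o : ({i // i ≠ j} → Fin Q) × Fin Q =>
      psiOutStd Q t n k hkt U G ε l (insAt j p o.1) o.2 (insAt j q b)) =
      ∑ σ : (Fin k → Fin Q) × ({i // i ≠ l} → Fin Q),
        (piKronecker (conjGates G hl)).mulVec (∑ z, (Real.sqrt ((Q : ℝ) ^ t) * ε z) •
          fun y => (starRingEnd ℂ) (Φ σ.1 (joinString e j l q b z y))) σ.2 •
        fun o => Φ σ.1 (joinString e j l p o.1 o.2 σ.2) := by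
  have : NeZero Q := ⟨p.pos.ne'⟩
  have hκ := sqrt_natCast_pow_ne_zero Q t
  ext ⟨a, x⟩
  rw [psiOutStd_insAt hkt G ε hl, Finset.sum_apply, Fintype.sum_prod_type, Finset.mul_sum]
  refine Finset.sum_congr rfl fun s _ => ?_
  rw [Finset.mul_sum]
  refine Finset.sum_congr rfl fun r _ => ?_
  simp only [hU, Matrix.mulVec, dotProduct, Finset.sum_apply, Pi.smul_apply, smul_eq_mul,
    Finset.mul_sum, Finset.sum_mul, map_mul, Complex.conj_ofReal]
  refine Finset.sum_congr rfl fun y _ => Finset.sum_congr rfl fun z _ => ?_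
  simp only [joinString]
  field_simp

theorem linearIndependent_psiOutStd_insAt (hkt : t = k + (n - t)) (ht : 2 ≤ t) (htn : t ≤ n)
    {Φ : (Fin k → Fin Q) → (Fin n → Fin Q) → ℂ} (hΦ : TUniform t Φ)
    {e : Fin t ⊕ Fin (n - t) ≃ Fin n} {U : Matrix (Fin t → Fin Q) (Fin t → Fin Q) ℂ}
    (hU : ∀ s a r, U a (fun i => Fin.append s r (Fin.cast hkt i)) =
      Real.sqrt ((Q : ℝ) ^ t) * Φ s (Sum.elim a r ∘ e.symm))
    {G : Fin (n - t - 1) → Matrix (Fin Q) (Fin Q) ℂ} (hG : ∀ i, IsUnit (G i))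
    {ε : Fin Q → ℂ} (hε : ε ≠ 0) {l : Fin (n - t)} (hl : (l : ℕ) = n - t - 1) (j : Fin t) :
    LinearIndependent ℂ fun (i : Fin Q × Fin Q) (b : {i // i ≠ j} → Fin Q)
      (o : ({i // i ≠ j} → Fin Q) × Fin Q) =>
        psiOutStd Q t n k hkt U G ε l (insAt j i.1 o.1) o.2 (insAt j i.2 b) := by
  obtain ⟨z, -⟩ := Function.ne_iff.mp hε
  have : NeZero Q := ⟨z.pos.ne'⟩
  have hfirst := hΦ.linearIndependent_joinString_exchange e j l hkt
  have hprojected := linearIndependent_sum_smul_right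
    (hΦ.conj.linearIndependent_joinString_pair e j l ht htn)
    (smul_ne_zero (sqrt_natCast_pow_ne_zero Q t) hε)
  have hsecond := linearIndependent_mulVec
    (Matrix.mulVec_injective_of_isUnit (isUnit_piKronecker (isUnit_conjGates hG hl))) hprojected
  simpa only [Finset.sum_apply, Pi.smul_apply, smul_eq_mul,
    ← psiOutStd_eq_sum_joinString hkt hU G ε hl] using linearIndependent_contract hfirst hsecond

theorem standardForm_entry_eq [NeZero Q] (hkt : t = k + (n - t))
    {Φ : (Fin k → Fin Q) → (Fin n → Fin Q) → ℂ}
    {T : Finset (Fin n)} (hT : T.card = t) (hTc : Tᶜ.card = n - t)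
    {U : Matrix (Fin t → Fin Q) (Fin t → Fin Q) ℂ}
    (hU : ∀ s w, Φ s w = (Real.sqrt ((Q : ℝ) ^ t) : ℂ)⁻¹ *
      U (fun i => w (T.orderEmbOfFin hT i))
        (fun i => Fin.append s (fun j => w (Tᶜ.orderEmbOfFin hTc j)) (Fin.cast hkt i)))
    (s : Fin k → Fin Q) (a : Fin t → Fin Q) (r : Fin (n - t) → Fin Q) :
    U a (fun i => Fin.append s r (Fin.cast hkt i)) =
      Real.sqrt ((Q : ℝ) ^ t) * Φ s (Sum.elim a r ∘ (finSumEquivOfFinset hT hTc).symm) := by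
  have hΦ := hU s (Sum.elim a r ∘ (finSumEquivOfFinset hT hTc).symm)
  simp only [← finSumEquivOfFinset_inl hT hTc, ← finSumEquivOfFinset_inr hT hTc,
    Function.comp_apply, Equiv.symm_apply_apply, Sum.elim_inl, Sum.elim_inr] at hΦ
  rw [hΦ, mul_inv_cancel_left₀ (sqrt_natCast_pow_ne_zero Q t)]

end PsiOut

theorem stmt_10_general (Q t n : ℕ) (ht : 2 ≤ t) (htn : t < n) (hn : n ≤ 2 * t)
    (k : ℕ) (hk : k = 2 * t - n)
    (Φ : (Fin k → Fin Q) → (Fin n → Fin Q) → ℂ) (huniform : TUniform t Φ)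
    (T : Finset (Fin n)) (hT : T.card = t) (hTc : Tᶜ.card = n - t)
    (U : Matrix (Fin t → Fin Q) (Fin t → Fin Q) ℂ)
    (hUstd : ∀ (s : Fin k → Fin Q) (w : Fin n → Fin Q),
      Φ s w = (Real.sqrt ((Q : ℝ) ^ t) : ℂ)⁻¹ *
        U (fun i => w (T.orderEmbOfFin hT i))
          (fun i => Fin.append s (fun j => w (Tᶜ.orderEmbOfFin hTc j))
            (Fin.cast (by omega : t = k + (n - t)) i)))
    (G : Fin (n - t - 1) → Matrix (Fin Q) (Fin Q) ℂ) (hG : ∀ i, IsUnit (G i))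
    (ε : Fin Q → ℂ) (hε : ε ≠ 0) (j : Fin t) :
    (Matrix.of fun (xy : Fin Q × Fin Q)
        (c : ({i : Fin t // i ≠ j} → Fin Q) × Fin Q × ({i : Fin t // i ≠ j} → Fin Q)) =>
      psiOutStd Q t n k (by omega) U G ε ⟨n - t - 1, by omega⟩
        (insAt j xy.1 c.1) c.2.1 (insAt j xy.2 c.2.2)).rank = Q ^ 2 := by
  have hkt : t = k + (n - t) := by omega
  obtain ⟨z, -⟩ := Function.ne_iff.mp hε
  have : NeZero Q := ⟨z.pos.ne'⟩
  have hLI := linearIndependent_psiOutStd_insAt hkt ht htn.le huniform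
    (standardForm_entry_eq hkt hT hTc hUstd) hG hε (l := ⟨n - t - 1, by omega⟩) rfl j
  rw [LinearIndependent.rank_matrix]
  · simp [sq]
  · exact .of_comp (LinearMap.pi fun b => LinearMap.funLeft ℂ ℂ
      fun o : ({i // i ≠ j} → Fin Q) × Fin Q => (o.1, o.2, b)) hLI

/-- Lemma 3.6.  With `U` a `T`-standard-form unitary of the `t`-uniform
state `Φ` (where `T ⊆ {1,…,n-1}`, qudit `n` being the last coordinate of `T^c`), arbitrary
unitaries `G_i` and a unit vector `ε`, the Schmidt rank of `ψ_out` across the bipartition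
`({W_j, W_j'} | all other qudits)` equals `Q²` for every `j ∈ {1,…,t}`. -/
theorem stmt_10 (Q t n : ℕ) (hQ : 2 ≤ Q) (ht : 2 ≤ t) (htn : t < n) (hn : n ≤ 2 * t)
    (k : ℕ) (hk : k = 2 * t - n)
    (Φ : (Fin k → Fin Q) → (Fin n → Fin Q) → ℂ)
    (hnorm : ∑ s : Fin k → Fin Q, ∑ w : Fin n → Fin Q,
      Φ s w * (starRingEnd ℂ) (Φ s w) = 1)
    (huniform : TUniform t Φ)
    (T : Finset (Fin n)) (hT : T.card = t) (hTc : Tᶜ.card = n - t)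
    (hTsub : ∀ i ∈ T, (i : ℕ) < n - 1)
    (U : Matrix (Fin t → Fin Q) (Fin t → Fin Q) ℂ)
    (hUuni : U ∈ Matrix.unitaryGroup (Fin t → Fin Q) ℂ)
    (hUstd : ∀ (s : Fin k → Fin Q) (w : Fin n → Fin Q),
      Φ s w = (Real.sqrt ((Q : ℝ) ^ t) : ℂ)⁻¹ *
        U (fun i => w (T.orderEmbOfFin hT i))
          (fun i => Fin.append s (fun j => w (Tᶜ.orderEmbOfFin hTc j))
            (Fin.cast (by omega : t = k + (n - t)) i)))
    (G : Fin (n - t - 1) → Matrix (Fin Q) (Fin Q) ℂ)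
    (hG : ∀ i, G i ∈ Matrix.unitaryGroup (Fin Q) ℂ)
    (ε : Fin Q → ℂ) (hε : ∑ m : Fin Q, ε m * (starRingEnd ℂ) (ε m) = 1) :
    ∀ j : Fin t,
      (Matrix.of fun (xy : Fin Q × Fin Q)
          (c : ({i : Fin t // i ≠ j} → Fin Q) × Fin Q × ({i : Fin t // i ≠ j} → Fin Q)) =>
        psiOutStd Q t n k (by omega) U G ε ⟨n - t - 1, by omega⟩
          (insAt j xy.1 c.1) c.2.1 (insAt j xy.2 c.2.2)).rank = Q ^ 2 := by
  exact stmt_10_general Q t n ht htn hn k hk Φ huniform T hT hTc U hUstd G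
    (fun i => .of_mul_eq_one _ (Matrix.mem_unitaryGroup_iff.mp (hG i))) ε
    (by rintro rfl; simp at hε)
end
end

section
/- Let Φ be a t-uniform purified code state, e ∈ {1,…,n}, and L ⊆ {1,…,n}∖{e} with |L| = t−1. Adjoin a replacement register Ŵ of dimension Q. For unit vectors ζ, ε ∈ ℂ^Q, define χ_in := Φ ⊗ ζ (with ζ on Ŵ) and χ_out := Φ̃ ⊗ ε (with ε on qudit e), where Φ̃ is the state with the same amplitudes as Φ but with the register Ŵ playing the role of the e-th qudit. Then the Schmidt rank of χ_in across the bipartition (qudits in L together with Ŵ | reference register R together with the qudits in {1,…,n}∖L) equals Q^{t−1}, while the Schmidt rank of χ_out across the same bipartition equals Q^t. (These are the Schmidt-rank computations in the proof of Lemma 3.1, which by monotonicity of Schmidt rank under LOCC show that quantum communication between the replacement node and only t−1 of the other nodes cannot correct the erasure of node e in an [[n, 2t−n]]_Q quantum MDS code.) -/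
open scoped BigOperators

noncomputable section

/-!
Across the bipartition, `χ_in` and `χ_out` are Kronecker products: `χ_in` is the coefficient matrix
of `Φ` with rows `W_L` times the column `ζ`, while in `χ_out` the register `Ŵ` joins `L` as the
`e`-th qudit, which leaves the coefficient matrix of `Φ` with rows `W_{L ∪ {e}}` times the row `ε`.
The vectors contribute rank one. A coefficient matrix `M` with rows `W_A` satisfies `ρ(W_A) = M Mᴴ`,
so it has full row rank `Q ^ |A|` as soon as `Φ` is `|A|`-uniform, and tracing out one qudit shows
that `t`-uniformity implies `(t - 1)`-uniformity.
-/

open Matrix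
open scoped Kronecker ComplexOrder

section MatrixRank

variable {K l m n p : Type*} [Field K]

lemma finrank_range_tensorProduct_map {U V W X : Type*} [AddCommGroup U] [Module K U]
    [AddCommGroup V] [Module K V] [AddCommGroup W] [Module K W] [AddCommGroup X] [Module K X]
    (f : U →ₗ[K] W) (g : V →ₗ[K] X) :
    Module.finrank K (TensorProduct.map f g).range =
      Module.finrank K f.range * Module.finrank K g.range := by
  have hrange : (TensorProduct.map f g).range = (TensorProduct.mapIncl f.range g.range).range := by
    rw [TensorProduct.range_mapIncl, TensorProduct.range_map]
  have hinj : Function.Injective (TensorProduct.mapIncl f.range g.range) :=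
    TensorProduct.map_injective_of_flat_flat _ _ f.range.injective_subtype g.range.injective_subtype
  rw [hrange, LinearMap.finrank_range_of_inj hinj, Module.finrank_tensorProduct]

lemma rank_kronecker [Finite l] [Fintype m] [Finite n] [Fintype p]
    (A : Matrix l m K) (B : Matrix n p K) : (A ⊗ₖ B).rank = A.rank * B.rank := by
  classical
  cases nonempty_fintype l
  cases nonempty_fintype n
  let bl := Pi.basisFun K l
  let bm := Pi.basisFun K m
  let bn := Pi.basisFun K n
  let bp := Pi.basisFun K p
  rw [(A ⊗ₖ B).rank_eq_finrank_range_toLin (bl.tensorProduct bn) (bm.tensorProduct bp),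
    A.rank_eq_finrank_range_toLin bl bm, B.rank_eq_finrank_range_toLin bn bp,
    Matrix.toLin_kronecker, finrank_range_tensorProduct_map]

lemma rank_replicateRow [Fintype n] {v : n → K} (hv : v ≠ 0) :
    (replicateRow Unit v).rank = 1 := by
  have hli : LinearIndependent K (replicateRow Unit v).row :=
    LinearIndependent.of_subsingleton () hv
  simpa using hli.rank_matrix

lemma rank_replicateCol [Finite n] {v : n → K} (hv : v ≠ 0) :
    (replicateCol Unit v).rank = 1 := by
  cases nonempty_fintype n
  rw [← rank_transpose, transpose_replicateCol, rank_replicateRow hv]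

end MatrixRank

section SplitAt

variable {ι : Type*} [DecidableEq ι] {p q : ι → Prop} {a : ι}

/-- Functions on a subtype `q` that consists of `a` and of the subtype `p` correspond to pairs of a
function on `p` and a value at `a`. Stated for predicates, so that it serves both for adding a qudit
to a set and for removing it from the complement. -/
def subtypeFunSplitAt (β : Type*) (ha : ¬ p a) (hq : ∀ i, q i ↔ i = a ∨ p i) :
    ({i // q i} → β) ≃ ({i // p i} → β) × β where
  toFun f := (fun i => f ⟨i, (hq i).2 (.inr i.2)⟩, f ⟨a, (hq a).2 (.inl rfl)⟩)
  invFun x i := if h : i.1 = a then x.2 else x.1 ⟨i, ((hq i).1 i.2).resolve_left h⟩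
  left_inv f := by
    funext ⟨i, hi⟩
    by_cases h : i = a
    · subst h; simp
    · simp [h]
  right_inv x := by
    have hne (i : {i // p i}) : i.1 ≠ a := fun h => ha (h ▸ i.2)
    simp [hne]

end SplitAt

section Merge

variable {n Q : ℕ} {e : Fin n} {L : Finset (Fin n)}

/-- Assignments to `L ∪ {e}` as pairs of an assignment to `L` and a value of the qudit `e`. -/
def insertAssignEquiv (Q : ℕ) (heL : e ∉ L) :
    ({i // i ∈ insert e L} → Fin Q) ≃ ({i // i ∈ L} → Fin Q) × Fin Q :=
  subtypeFunSplitAt (Fin Q) heL fun _ => Finset.mem_insert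

/-- Assignments off `L` as pairs of an assignment off `L ∪ {e}` and a value of the qudit `e`. -/
def complAssignEquiv (Q : ℕ) (heL : e ∉ L) :
    ({i // i ∉ L} → Fin Q) ≃ ({i // i ∉ insert e L} → Fin Q) × Fin Q :=
  subtypeFunSplitAt (Fin Q) (not_not_intro (Finset.mem_insert_self e L)) fun i => by
    by_cases h : i = e <;> simp [h, heL]

lemma mergeOn_complAssignEquiv_symm (heL : e ∉ L) (u : {i // i ∈ L} → Fin Q)
    (w : {i // i ∉ insert e L} → Fin Q) (m : Fin Q) :
    mergeOn L u ((complAssignEquiv Q heL).symm (w, m)) =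
      mergeOn (insert e L) ((insertAssignEquiv Q heL).symm (u, m)) w := by
  funext i
  by_cases hie : i = e
  · subst hie
    simp [mergeOn, complAssignEquiv, insertAssignEquiv, subtypeFunSplitAt, heL]
  · simp [mergeOn, complAssignEquiv, insertAssignEquiv, subtypeFunSplitAt, hie]

lemma mergeOn_apply_of_notMem (heL : e ∉ L) (u : {i // i ∈ L} → Fin Q)
    (c : {i // i ∉ L} → Fin Q) : mergeOn L u c e = c ⟨e, heL⟩ :=
  dif_neg heL

lemma update_mergeOn (heL : e ∉ L) (u : {i // i ∈ L} → Fin Q) (c : {i // i ∉ L} → Fin Q)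
    (m : Fin Q) :
    Function.update (mergeOn L u c) e m =
      mergeOn (insert e L) ((insertAssignEquiv Q heL).symm (u, m))
        (complAssignEquiv Q heL c).1 := by
  funext i
  by_cases hie : i = e
  · subst hie
    simp [mergeOn, insertAssignEquiv, subtypeFunSplitAt]
  · simp [mergeOn, complAssignEquiv, insertAssignEquiv, subtypeFunSplitAt, hie]

end Merge

section CodeState

variable {Q k n t : ℕ} {e : Fin n} {L : Finset (Fin n)}

/-- The amplitudes of `Φ` arranged as a matrix across the bipartition `(W_A | R, W_{A^c})`; its rank
is the Schmidt rank of `Φ`. -/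
def coeffMatrix (Φ : (Fin k → Fin Q) → (Fin n → Fin Q) → ℂ) (A : Finset (Fin n)) :
    Matrix ({i // i ∈ A} → Fin Q) ((Fin k → Fin Q) × ({i // i ∉ A} → Fin Q)) ℂ :=
  Matrix.of fun u c => Φ c.1 (mergeOn A u c.2)

/-- The amplitudes of `χ_in = Φ ⊗ ζ` across the bipartition `(W_L, Ŵ | R, W_{L^c})`. -/
def inputMatrix (Φ : (Fin k → Fin Q) → (Fin n → Fin Q) → ℂ) (L : Finset (Fin n))
    (ζ : Fin Q → ℂ) :
    Matrix (({i // i ∈ L} → Fin Q) × Fin Q) ((Fin k → Fin Q) × ({i // i ∉ L} → Fin Q)) ℂ :=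
  Matrix.of fun u c => Φ c.1 (mergeOn L u.1 c.2) * ζ u.2

/-- The amplitudes of `χ_out = Φ̃ ⊗ ε` across the bipartition `(W_L, Ŵ | R, W_{L^c})`: the `e`-th
argument of `Φ` is read off `Ŵ`, and `ε` sits on the qudit `e`. -/
def outputMatrix (Φ : (Fin k → Fin Q) → (Fin n → Fin Q) → ℂ) (L : Finset (Fin n)) (e : Fin n)
    (ε : Fin Q → ℂ) :
    Matrix (({i // i ∈ L} → Fin Q) × Fin Q) ((Fin k → Fin Q) × ({i // i ∉ L} → Fin Q)) ℂ :=
  Matrix.of fun u c =>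
    Φ c.1 (Function.update (mergeOn L u.1 c.2) e u.2) * ε (mergeOn L u.1 c.2 e)

variable {Φ : (Fin k → Fin Q) → (Fin n → Fin Q) → ℂ}

lemma rdm_eq_coeffMatrix_mul_conjTranspose (Φ : (Fin k → Fin Q) → (Fin n → Fin Q) → ℂ)
    (A : Finset (Fin n)) : rdm Φ A = coeffMatrix Φ A * (coeffMatrix Φ A)ᴴ := by
  ext u v
  simp [rdm, coeffMatrix, Matrix.mul_apply, Fintype.sum_prod_type]

lemma rdm_eq_sum_rdm_insert (Φ : (Fin k → Fin Q) → (Fin n → Fin Q) → ℂ) (heL : e ∉ L)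
    (u v : {i // i ∈ L} → Fin Q) :
    rdm Φ L u v = ∑ m, rdm Φ (insert e L)
      ((insertAssignEquiv Q heL).symm (u, m)) ((insertAssignEquiv Q heL).symm (v, m)) := by
  simp only [rdm, Matrix.of_apply]
  rw [Finset.sum_comm (s := Finset.univ (α := Fin Q))]
  refine Finset.sum_congr rfl fun s _ => ?_
  rw [← Equiv.sum_comp (complAssignEquiv Q heL).symm, Fintype.sum_prod_type_right]
  simp only [mergeOn_complAssignEquiv_symm]

lemma TUniform.of_succ [NeZero Q] (hΦ : TUniform (t + 1) Φ) (htn : t < n) : TUniform t Φ := by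
  intro A hA
  obtain ⟨e, heA⟩ : ∃ e, e ∉ A := by
    by_contra! hall
    rw [Finset.eq_univ_of_forall hall, Finset.card_fin] at hA
    exact htn.ne' hA
  have hQ : (Q : ℂ) ≠ 0 := NeZero.ne _
  ext u v
  rw [rdm_eq_sum_rdm_insert Φ heA,
    hΦ (insert e A) (by rw [Finset.card_insert_of_notMem heA, hA])]
  simp only [Matrix.smul_apply, Matrix.one_apply, EmbeddingLike.apply_eq_iff_eq, Prod.mk.injEq,
    and_true, Finset.sum_const, Finset.card_fin, nsmul_eq_mul, smul_eq_mul]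
  field_simp
  ring

lemma TUniform.rank_coeffMatrix [NeZero Q] (hΦ : TUniform t Φ) {A : Finset (Fin n)}
    (hA : A.card = t) : (coeffMatrix Φ A).rank = Q ^ t := by
  have hscale : ((Q : ℂ) ^ t)⁻¹ ∈ nonZeroDivisors ℂ :=
    mem_nonZeroDivisors_of_ne_zero (inv_ne_zero (pow_ne_zero t (NeZero.ne _)))
  rw [← rank_self_mul_conjTranspose, ← rdm_eq_coeffMatrix_mul_conjTranspose, hΦ A hA,
    rank_smul_of_mem_nonZeroDivisors _ hscale, rank_one]
  simp [hA]

lemma rank_inputMatrix (Φ : (Fin k → Fin Q) → (Fin n → Fin Q) → ℂ) (L : Finset (Fin n))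
    {ζ : Fin Q → ℂ} (hζ : ζ ≠ 0) : (inputMatrix Φ L ζ).rank = (coeffMatrix Φ L).rank := by
  have hkron : inputMatrix Φ L ζ = (coeffMatrix Φ L ⊗ₖ replicateCol Unit ζ).submatrix
      (Equiv.refl _) (Equiv.prodPUnit _).symm := rfl
  rw [hkron, rank_submatrix, rank_kronecker, rank_replicateCol hζ, mul_one]

lemma rank_outputMatrix (Φ : (Fin k → Fin Q) → (Fin n → Fin Q) → ℂ) (heL : e ∉ L)
    {ε : Fin Q → ℂ} (hε : ε ≠ 0) :
    (outputMatrix Φ L e ε).rank = (coeffMatrix Φ (insert e L)).rank := by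
  have hkron : outputMatrix Φ L e ε =
      (coeffMatrix Φ (insert e L) ⊗ₖ replicateRow Unit ε).submatrix
        ((insertAssignEquiv Q heL).symm.trans (Equiv.prodPUnit _).symm)
        (((Equiv.refl _).prodCongr (complAssignEquiv Q heL)).trans
          (Equiv.prodAssoc _ _ _).symm) := by
    ext u c
    simp only [outputMatrix, of_apply, update_mergeOn heL, mergeOn_apply_of_notMem heL]
    rfl
  rw [hkron, rank_submatrix, rank_kronecker, rank_replicateRow hε, mul_one]

end CodeState

theorem stmt_12_general {Q k n : ℕ} {Φ : (Fin k → Fin Q) → (Fin n → Fin Q) → ℂ}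
    {e : Fin n} {L : Finset (Fin n)} (hΦ : TUniform (L.card + 1) Φ) (heL : e ∉ L)
    {ζ ε : Fin Q → ℂ} (hζ : ζ ≠ 0) (hε : ε ≠ 0) :
    (inputMatrix Φ L ζ).rank = Q ^ L.card ∧ (outputMatrix Φ L e ε).rank = Q ^ (L.card + 1) := by
  obtain ⟨m, -⟩ := Function.ne_iff.mp hζ
  have : NeZero Q := ⟨m.pos.ne'⟩
  have hcard : (insert e L).card = L.card + 1 := Finset.card_insert_of_notMem heL
  have hLn : L.card < n := by simpa [hcard] using (insert e L).card_le_univ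
  exact ⟨(rank_inputMatrix Φ L hζ).trans ((hΦ.of_succ hLn).rank_coeffMatrix rfl),
    (rank_outputMatrix Φ heL hε).trans (hΦ.rank_coeffMatrix hcard)⟩

/-- Schmidt-rank computations in the proof of Lemma 3.1.  Let `Φ` be a
`t`-uniform purified code state, `e` a qudit and `L` a set of `t-1` other qudits; adjoin a
replacement register `Ŵ` of dimension `Q`.  For unit vectors `ζ, ε ∈ ℂ^Q`, consider
`χ_in = Φ ⊗ ζ` (with `ζ` on `Ŵ`) and `χ_out = Φ̃ ⊗ ε` (with `Ŵ` playing the role of qudit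
`e` and `ε` on qudit `e`).  Across the bipartition `(W_L, Ŵ | R, W_{L^c})` — rows indexed by
assignments to `L` and `Ŵ`, columns by assignments to `R` and the qudits outside `L` — the
Schmidt rank of `χ_in` is `Q^{t-1}` while that of `χ_out` is `Q^t`; by LOCC monotonicity of
the Schmidt rank, `t-1` helper nodes cannot correct the erasure. -/
theorem stmt_12 (Q t n : ℕ) (hQ : 2 ≤ Q) (ht : 1 < t) (htn : t < n) (hn : n ≤ 2 * t)
    (k : ℕ) (hk : k = 2 * t - n)
    (Φ : (Fin k → Fin Q) → (Fin n → Fin Q) → ℂ)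
    (hnorm : ∑ s : Fin k → Fin Q, ∑ w : Fin n → Fin Q,
      Φ s w * (starRingEnd ℂ) (Φ s w) = 1)
    (huniform : TUniform t Φ)
    (e : Fin n) (L : Finset (Fin n)) (hL : L.card = t - 1) (heL : e ∉ L)
    (ζ : Fin Q → ℂ) (hζ : ∑ m : Fin Q, ζ m * (starRingEnd ℂ) (ζ m) = 1)
    (ε : Fin Q → ℂ) (hε : ∑ m : Fin Q, ε m * (starRingEnd ℂ) (ε m) = 1) :
    -- the Schmidt rank of χ_in = Φ ⊗ ζ across (W_L, Ŵ | R, W_{L^c}) equals Q^(t-1)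
    (Matrix.of fun (u : ({i // i ∈ L} → Fin Q) × Fin Q)
        (c : (Fin k → Fin Q) × ({i // i ∉ L} → Fin Q)) =>
      Φ c.1 (mergeOn L u.1 c.2) * ζ u.2).rank = Q ^ (t - 1) ∧
    -- the Schmidt rank of χ_out = Φ̃ ⊗ ε across (W_L, Ŵ | R, W_{L^c}) equals Q^t
    (Matrix.of fun (u : ({i // i ∈ L} → Fin Q) × Fin Q)
        (c : (Fin k → Fin Q) × ({i // i ∉ L} → Fin Q)) =>
      Φ c.1 (Function.update (mergeOn L u.1 c.2) e u.2) *
        ε (mergeOn L u.1 c.2 e)).rank = Q ^ t := by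
  have ne_zero {v : Fin Q → ℂ} (hv : ∑ m, v m * (starRingEnd ℂ) (v m) = 1) : v ≠ 0 := by
    rintro rfl
    simp at hv
  obtain rfl : t = L.card + 1 := by omega
  exact stmt_12_general huniform heL (ne_zero hζ) (ne_zero hε)
end
end
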